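/- Let ℓ be a positive integer that is not of the form 4^n − 1 for any integer n ≥ 1. Then there exists a constant C > 0 such that for all sufficiently large x, #{p ≤ x : p prime, p > ℓ, φ(p−ℓ) = φ(p+ℓ)} ≤ C · x / exp((log x)^{1/3}). -/

import Mathlib

open Filter Topology

/-!
Following Graham, Holt and Pomerance, consider `φ n = φ (n + k)`. Outside a sparse set of `n`
(smooth numbers, numbers with a large square divisor, numbers with a large prime factor `P` such
that `P - 1` is smooth), `n = a * P` for a large prime `P` and some large prime `r` divides `P - 1`,
hence divides `φ (n + k)`; this forces `n + k = b * q` with `q` prime and `r ∣ q - 1`. If `P * q`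
is small, the congruences `P ≡ q ≡ 1 (mod r)` make such `n` rare. Otherwise `a * b` is small, and
`b * φ a ≠ a * φ b` would let `a` and `b` determine `n`, because the two equations are linear in `P`
and `q`. Up to a negligible set, then, solutions satisfy `φ a / a = φ b / b`.

For `n = p - ℓ` and `k = 2 * ℓ` this last case gives `b = a + 2 * ℓ`, and `a` is prime to `ℓ` as `p`
is prime, so `gcd a b ∣ 2`. Then `a` and `b` are powers of `2`, whence `a = 2` and `ℓ + 1 = 2 ^ m`.
Since none of `P`, `q`, `p` is divisible by `3`, `m` is even, i.e. `ℓ = 4 ^ s - 1`.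
-/

section

open Finset Real
open scoped Nat

/-! ### Degenerate solutions -/

theorem eq_two_pow_of_dvd_two_mul_totient {b : ℕ} (hb : b ≠ 0) (h : b ∣ 2 * φ b) :
    ∃ i, b = 2 ^ i := by
  obtain ⟨i, o, ho, rfl⟩ := Nat.exists_eq_two_pow_mul_odd hb
  have hcop : Nat.Coprime (2 ^ i) o := (Nat.coprime_two_left.mpr ho).pow_left i
  have hpow : 2 * φ (2 ^ i) ∣ 2 ^ (i + 1) := by
    cases i with
    | zero => simp
    | succ i => rw [Nat.totient_prime_pow_succ Nat.prime_two]; exact ⟨2, by ring⟩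
  have hdvd : o ∣ φ o := by
    rw [Nat.totient_mul hcop, ← mul_assoc] at h
    refine Nat.Coprime.dvd_of_dvd_mul_left ?_ ((dvd_mul_left o _).trans h)
    exact ((Nat.coprime_two_left.mpr ho).pow_left (i + 1)).symm.coprime_dvd_right hpow
  have ho1 : o = 1 := by
    by_contra hne
    have := Nat.totient_lt o (by have := ho.pos; omega)
    have := Nat.le_of_dvd (Nat.totient_pos.mpr ho.pos) hdvd
    omega
  exact ⟨i, by rw [ho1, mul_one]⟩

theorem eq_two_pow_of_totient_ratio_eq {a b : ℕ} (hb : b ≠ 0) (hgcd : a.gcd b ∣ 2)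
    (h : b * φ a = a * φ b) : ∃ i, b = 2 ^ i := by
  apply eq_two_pow_of_dvd_two_mul_totient hb
  have hdvd : b ∣ a.gcd b * φ b := by
    rw [← Nat.gcd_mul_right]
    exact Nat.dvd_gcd ⟨_, h.symm⟩ (dvd_mul_right b _)
  exact hdvd.trans (Nat.mul_dvd_mul_right hgcd _)

/-- `n = a * P` with `P` a prime occurring in `n` to the first power only. -/
structure SplitsOffPrime (n a P : ℕ) : Prop where
  prime : P.Prime
  not_dvd : ¬ P ∣ a
  eq_mul : n = a * P

theorem SplitsOffPrime.totient_eq {n a P : ℕ} (h : SplitsOffPrime n a P) :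
    φ n = φ a * (P - 1) := by
  rw [h.eq_mul, mul_comm, Nat.totient_mul_of_prime_of_not_dvd h.prime h.not_dvd, mul_comm]

theorem SplitsOffPrime.cofactor_pos {n a P : ℕ} (h : SplitsOffPrime n a P) : 0 < a :=
  Nat.pos_of_ne_zero fun ha => h.not_dvd (ha ▸ dvd_zero P)

theorem exists_splitsOffPrime {n P : ℕ} (hP : P.Prime) (hdvd : P ∣ n) (hsq : ¬ P ^ 2 ∣ n) :
    ∃ a, SplitsOffPrime n a P := by
  obtain ⟨a, rfl⟩ := hdvd
  exact ⟨a, hP, fun ha => hsq (sq P ▸ Nat.mul_dvd_mul_left P ha), mul_comm P a⟩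

/-- `n` and `n + k` split off primes `P, q > 3` in such a way that the remaining cofactors `a, b`
satisfy `φ a / a = φ b / b`. Infinitely many solutions of `φ n = φ (n + k)` can be of this shape,
which is excluded from the upper bound of Graham, Holt and Pomerance. -/
def IsDegenerate (k n : ℕ) : Prop :=
  ∃ a P b q, SplitsOffPrime n a P ∧ SplitsOffPrime (n + k) b q ∧ 3 < P ∧ 3 < q ∧
    b * φ a = a * φ b

theorem mul_pred_eq_of_totient_eq {n m a P b q : ℕ} (hn : SplitsOffPrime n a P)
    (hm : SplitsOffPrime m b q) (h : φ n = φ m) (hdeg : b * φ a = a * φ b) :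
    a * (P - 1) = b * (q - 1) := by
  rw [hn.totient_eq, hm.totient_eq] at h
  apply Nat.eq_of_mul_eq_mul_left (Nat.totient_pos.mpr hm.cofactor_pos)
  calc φ b * (a * (P - 1)) = a * φ b * (P - 1) := by ring
    _ = b * (φ a * (P - 1)) := by rw [← hdeg]; ring
    _ = φ b * (b * (q - 1)) := by rw [h]; ring

theorem cofactor_eq_add {n k a P b q : ℕ} (hn : SplitsOffPrime n a P)
    (hm : SplitsOffPrime (n + k) b q) (h : a * (P - 1) = b * (q - 1)) : b = a + k := by
  have hP : a * P = a * (P - 1) + a := by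
    rw [← Nat.mul_succ, Nat.succ_eq_add_one, Nat.sub_add_cancel hn.prime.one_le]
  have hq : b * q = b * (q - 1) + b := by
    rw [← Nat.mul_succ, Nat.succ_eq_add_one, Nat.sub_add_cancel hm.prime.one_le]
  have := hn.eq_mul
  have := hm.eq_mul
  omega

theorem coprime_of_prime_add {n ℓ : ℕ} (hn : 0 < n) (hℓ : 0 < ℓ) (hp : (n + ℓ).Prime) :
    n.Coprime ℓ :=
  Nat.coprime_add_self_left.mp (Nat.coprime_of_lt_prime hℓ.ne' (by omega) hp)

theorem two_and_two_pow_of_totient_ratio_eq {a ℓ : ℕ} (ha : 0 < a) (hℓ : 0 < ℓ)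
    (hcop : a.Coprime ℓ) (h : (a + 2 * ℓ) * φ a = a * φ (a + 2 * ℓ)) :
    a = 2 ∧ ∃ m, ℓ + 1 = 2 ^ m := by
  have hgcd : a.gcd (a + 2 * ℓ) ∣ 2 := by
    rw [Nat.gcd_self_add_right]
    exact (hcop.coprime_dvd_left (Nat.gcd_dvd_left _ _)).dvd_of_dvd_mul_right
      (Nat.gcd_dvd_right _ _)
  obtain ⟨i, hi⟩ := eq_two_pow_of_totient_ratio_eq ha.ne' (Nat.gcd_comm _ _ ▸ hgcd) h.symm
  obtain ⟨j, hj⟩ := eq_two_pow_of_totient_ratio_eq (by omega) hgcd h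
  have hij : i < j := (Nat.pow_lt_pow_iff_right one_lt_two).mp (by omega)
  have hdvd : a ∣ a + 2 * ℓ := by rw [hj, hi]; exact pow_dvd_pow 2 hij.le
  obtain ⟨m, rfl⟩ : ∃ m, j = m + 1 := ⟨j - 1, by omega⟩
  rw [Nat.gcd_eq_left hdvd] at hgcd
  have ha2 : a = 2 := by
    rcases (Nat.dvd_prime Nat.prime_two).mp hgcd with ha1 | ha2
    · omega
    · exact ha2
  exact ⟨ha2, m, by omega⟩

theorem even_exponent_of_three_lt_primes {m P q : ℕ} (hP : P.Prime) (hq : q.Prime) (hP3 : 3 < P)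
    (hq3 : 3 < q) (hp : (2 * P + (2 ^ m - 1)).Prime) (h : P - 1 = 2 ^ m * (q - 1)) : Even m := by
  by_contra hm
  obtain ⟨s, rfl⟩ := Nat.not_even_iff_odd.mp hm
  have not_three_dvd {r : ℕ} (hr : r.Prime) (hr3 : 3 < r) : r % 3 ≠ 0 := fun h0 => by
    rcases (Nat.dvd_prime hr).mp (Nat.dvd_of_mod_eq_zero h0) with h | h <;> omega
  have hmod : 2 ^ (2 * s + 1) % 3 = 2 := by
    rw [pow_succ, pow_mul, Nat.mul_mod, Nat.pow_mod]; norm_num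
  have hPq : (P - 1) % 3 = 2 * ((q - 1) % 3) % 3 := by rw [h, Nat.mul_mod, hmod]
  have := not_three_dvd hP hP3
  have := not_three_dvd hq hq3
  have := not_three_dvd hp (by omega)
  generalize 2 ^ (2 * s + 1) = M at *
  obtain hq1 | hq1 : (q - 1) % 3 = 0 ∨ (q - 1) % 3 = 1 := by omega
  all_goals rw [hq1] at hPq; omega

theorem not_isDegenerate_of_prime_add {ℓ n : ℕ} (hℓ : 0 < ℓ)
    (h4 : ¬ ∃ m : ℕ, 1 ≤ m ∧ ℓ = 4 ^ m - 1) (hp : (n + ℓ).Prime)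
    (h : φ n = φ (n + 2 * ℓ)) : ¬ IsDegenerate (2 * ℓ) n := by
  rintro ⟨a, P, b, q, hn, hm, hP3, hq3, hdeg⟩
  have hpred := mul_pred_eq_of_totient_eq hn hm h hdeg
  obtain rfl := cofactor_eq_add hn hm hpred
  have hnpos : 0 < n := hn.eq_mul ▸ Nat.mul_pos hn.cofactor_pos hn.prime.pos
  have hcop : a.Coprime ℓ :=
    (coprime_of_prime_add hnpos hℓ hp).coprime_dvd_left ⟨P, hn.eq_mul⟩
  obtain ⟨rfl, m, hm2⟩ := two_and_two_pow_of_totient_ratio_eq hn.cofactor_pos hℓ hcop hdeg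
  have hℓm : ℓ = 2 ^ m - 1 := by omega
  have hPq : P - 1 = 2 ^ m * (q - 1) := by
    rw [show 2 + 2 * ℓ = 2 * 2 ^ m by omega, mul_assoc] at hpred
    omega
  have hp' : (2 * P + (2 ^ m - 1)).Prime := by rwa [← hn.eq_mul, ← hℓm]
  obtain ⟨s, rfl⟩ := even_exponent_of_three_lt_primes hn.prime hm.prime hP3 hq3 hp' hPq
  have hpow : 2 ^ (s + s) = 4 ^ s := by rw [← two_mul, pow_mul]; norm_num
  have hs : s ≠ 0 := by rintro rfl; simp at hm2; omega
  exact h4 ⟨s, by omega, by omega⟩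

/-! ### Rankin's bound for smooth numbers -/

theorem sum_one_div_Icc_le (M : ℕ) : ∑ i ∈ Icc 1 M, (1 : ℝ) / i ≤ 1 + log M := by
  simpa [harmonic_eq_sum_Icc] using harmonic_le_one_add_log M

theorem card_primes_dyadic_mul_le (j : ℕ) :
    (#{p ∈ Ico (2 ^ j) (2 ^ (j + 1)) | p.Prime} : ℝ) * j ≤ 4 * 2 ^ j := by
  set s := {p ∈ Ico (2 ^ j) (2 ^ (j + 1)) | p.Prime} with hs
  have hlower : #s * (j * log 2) ≤ ∑ p ∈ s, log p := by
    rw [← nsmul_eq_mul]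
    refine card_nsmul_le_sum _ _ _ fun p hp => ?_
    rw [hs, mem_filter, mem_Ico] at hp
    rw [← log_pow]
    exact log_le_log (by positivity) (by exact_mod_cast hp.1.1)
  have hupper : ∑ p ∈ s, log p ≤ log 4 * 2 ^ (j + 1) := by
    have htheta := Chebyshev.theta_le_log4_mul_x (x := ((2 ^ (j + 1) : ℕ) : ℝ)) (by positivity)
    rw [Chebyshev.theta_eq_sum_primesLE_log] at htheta
    refine le_trans (sum_le_sum_of_subset_of_nonneg (fun p hp => ?_) fun p _ _ =>
      log_natCast_nonneg p) (htheta.trans_eq (by push_cast; rfl))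
    rw [hs, mem_filter, mem_Ico] at hp
    rw [Nat.primesLE, Nat.mem_primesBelow]
    exact ⟨by omega, hp.2⟩
  have hlog4 : log 4 = 2 * log 2 := by
    rw [show (4 : ℝ) = 2 ^ 2 by norm_num, log_pow, Nat.cast_ofNat]
  refine le_of_mul_le_mul_right ?_ (log_pos one_lt_two)
  calc (#s : ℝ) * j * log 2 = #s * (j * log 2) := mul_assoc ..
    _ ≤ log 4 * 2 ^ (j + 1) := hlower.trans hupper
    _ = 4 * 2 ^ j * log 2 := by rw [hlog4]; ring

theorem sum_one_div_primes_dyadic_le {j : ℕ} (hj : 1 ≤ j) :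
    ∑ p ∈ Ico (2 ^ j) (2 ^ (j + 1)) with Nat.Prime p, (1 : ℝ) / p ≤ 4 / j := by
  set s := {p ∈ Ico (2 ^ j) (2 ^ (j + 1)) | p.Prime} with hs
  calc ∑ p ∈ s, (1 : ℝ) / p ≤ #s • (1 / 2 ^ j) := by
        refine sum_le_card_nsmul _ _ _ fun p hp => ?_
        rw [hs, mem_filter, mem_Ico] at hp
        exact one_div_le_one_div_of_le (by positivity) (by exact_mod_cast hp.1.1)
    _ = #s / 2 ^ j := by rw [nsmul_eq_mul, mul_one_div]
    _ ≤ 4 / j := by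
        rw [div_le_div_iff₀ (by positivity) (by exact_mod_cast hj)]
        exact card_primes_dyadic_mul_le j

theorem sum_one_div_primesBelow_two_pow_le (J : ℕ) :
    ∑ p ∈ Nat.primesBelow (2 ^ (J + 1)), (1 : ℝ) / p ≤ 4 * ∑ j ∈ Icc 1 J, (1 : ℝ) / j := by
  induction J with
  | zero => simp [Nat.primesBelow_two]
  | succ J ih =>
    calc ∑ p ∈ Nat.primesBelow (2 ^ (J + 1 + 1)), (1 : ℝ) / p
        = ∑ p ∈ Nat.primesBelow (2 ^ (J + 1)), (1 : ℝ) / p +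
          ∑ p ∈ Ico (2 ^ (J + 1)) (2 ^ (J + 1 + 1)) with Nat.Prime p, (1 : ℝ) / p := by
          simp only [Nat.primesBelow, sum_filter]
          exact (sum_range_add_sum_Ico _ (Nat.pow_le_pow_right two_pos (Nat.le_succ _))).symm
      _ ≤ 4 * ∑ j ∈ Icc 1 J, (1 : ℝ) / j + 4 / (J + 1 : ℕ) :=
          add_le_add ih (sum_one_div_primes_dyadic_le (Nat.le_add_left 1 J))
      _ = 4 * ∑ j ∈ Icc 1 (J + 1), (1 : ℝ) / j := by
          rw [sum_Icc_succ_top (Nat.le_add_left 1 J), mul_add, mul_one_div]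

theorem natLog_two_floor_le {y : ℝ} (hy : 1 ≤ y) : (Nat.log 2 ⌊y⌋₊ : ℝ) ≤ 2 * log y := by
  have hfloor : ⌊y⌋₊ ≠ 0 := (Nat.floor_pos.mpr hy).ne'
  have hpow : ((2 ^ Nat.log 2 ⌊y⌋₊ : ℕ) : ℝ) ≤ y :=
    (Nat.le_floor_iff (by linarith)).mp (Nat.pow_log_le_self 2 hfloor)
  have hlog := log_le_log (by positivity) hpow
  rw [Nat.cast_pow, Nat.cast_ofNat, log_pow] at hlog
  nlinarith [log_two_gt_d9, (Nat.cast_nonneg (Nat.log 2 ⌊y⌋₊) : (0 : ℝ) ≤ _)]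

theorem sum_one_div_primesBelow_ceil_le {y : ℝ} (hy : 1 ≤ log y) (hy0 : 0 ≤ y) :
    ∑ p ∈ Nat.primesBelow ⌈y⌉₊, (1 : ℝ) / p ≤ 4 * (1 + log (2 * log y)) := by
  have hy1 : 1 ≤ y := by
    by_contra! h
    linarith [log_nonpos hy0 h.le]
  set J := Nat.log 2 ⌊y⌋₊
  have hsub : Nat.primesBelow ⌈y⌉₊ ⊆ Nat.primesBelow (2 ^ (J + 1)) := fun p hp => by
    rw [Nat.mem_primesBelow, Nat.lt_ceil] at hp
    rw [Nat.mem_primesBelow]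
    exact ⟨(Nat.le_floor hp.1.le).trans_lt (Nat.lt_pow_succ_log_self one_lt_two _), hp.2⟩
  have hlogJ : log J ≤ log (2 * log y) := by
    rcases Nat.eq_zero_or_pos J with hJ | hJ
    · rw [hJ, Nat.cast_zero, log_zero]
      exact log_nonneg (by linarith)
    · exact log_le_log (by exact_mod_cast hJ) (natLog_two_floor_le hy1)
  calc ∑ p ∈ Nat.primesBelow ⌈y⌉₊, (1 : ℝ) / p
      ≤ ∑ p ∈ Nat.primesBelow (2 ^ (J + 1)), (1 : ℝ) / p :=
        sum_le_sum_of_subset_of_nonneg hsub fun _ _ _ => by positivity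
    _ ≤ 4 * ∑ j ∈ Icc 1 J, (1 : ℝ) / j := sum_one_div_primesBelow_two_pow_le J
    _ ≤ 4 * (1 + log (2 * log y)) := by
        gcongr
        exact (sum_one_div_Icc_le J).trans (by gcongr)

theorem sum_rpow_neg_le_prod_inv_one_sub {N : ℕ} {s : ℝ} (hs : 0 < s) {F : Finset ℕ}
    (hF : ∀ n ∈ F, n ∈ Nat.smoothNumbers N) :
    ∑ n ∈ F, (n : ℝ) ^ (-s) ≤ ∏ p ∈ N.primesBelow, (1 - (p : ℝ) ^ (-s))⁻¹ := by
  let f : ℕ →* ℝ :=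
    { toFun := fun n => (n : ℝ) ^ (-s)
      map_one' := by simp
      map_mul' := fun m n => by
        rw [Nat.cast_mul, mul_rpow (Nat.cast_nonneg m) (Nat.cast_nonneg n)] }
  have hf_nonneg (n : ℕ) : 0 ≤ f n := rpow_nonneg (Nat.cast_nonneg n) _
  have hf_lt_one {p : ℕ} (hp : p.Prime) : ‖f p‖ < 1 := by
    rw [norm_of_nonneg (hf_nonneg p)]
    exact rpow_lt_one_of_one_lt_of_neg (by exact_mod_cast hp.one_lt) (neg_lt_zero.mpr hs)
  have hEuler :=
    (EulerProduct.summable_and_hasSum_smoothNumbers_prod_primesBelow_geometric hf_lt_one N).2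
  calc ∑ n ∈ F, f n = ∑ n ∈ F.subtype (· ∈ Nat.smoothNumbers N), f n :=
        (sum_subtype_of_mem (fun n => f n) hF).symm
    _ ≤ ∏ p ∈ N.primesBelow, (1 - f p)⁻¹ := sum_le_hasSum _ (fun n _ => hf_nonneg n) hEuler

theorem inv_one_sub_le_exp {t : ℝ} (h0 : 0 ≤ t) (h1 : t ≤ 3 / 4) : (1 - t)⁻¹ ≤ exp (4 * t) := by
  calc (1 - t)⁻¹ ≤ 4 * t + 1 := by
        rw [inv_le_iff_one_le_mul₀ (by linarith)]
        nlinarith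
    _ ≤ exp (4 * t) := add_one_le_exp _

theorem rpow_neg_le_three_quarters {u s : ℝ} (hu : 2 ≤ u) (hs : 1 / 2 ≤ s) :
    u ^ (-s) ≤ 3 / 4 := by
  calc u ^ (-s) ≤ 2 ^ (-s) := rpow_le_rpow_of_nonpos two_pos hu (by linarith)
    _ ≤ 2 ^ (-(1 / 2 : ℝ)) := rpow_le_rpow_of_exponent_le one_le_two (by linarith)
    _ = (√2)⁻¹ := by rw [rpow_neg zero_le_two, ← sqrt_eq_rpow]
    _ ≤ 3 / 4 := by
        rw [inv_le_comm₀ (by positivity) (by norm_num)]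
        exact le_sqrt_of_sq_le (by norm_num)

theorem rpow_neg_one_sub_div_log_le {u y c : ℝ} (hu : 0 < u) (huy : u ≤ y) (hy : 0 < log y)
    (hc : 0 ≤ c) : u ^ (-(1 - c / log y)) ≤ exp c * (1 / u) := by
  rw [neg_sub, rpow_sub hu, rpow_one, mul_one_div]
  gcongr
  rw [rpow_def_of_pos hu, exp_le_exp]
  calc log u * (c / log y) ≤ log y * (c / log y) := by gcongr
    _ = c := mul_div_cancel₀ c hy.ne'

theorem prod_inv_one_sub_rpow_le {y c : ℝ} (hy0 : 0 ≤ y) (hy : 1 ≤ log y) (hc : 0 ≤ c)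
    (hcy : 2 * c ≤ log y) :
    ∏ p ∈ Nat.primesBelow ⌈y⌉₊, (1 - (p : ℝ) ^ (-(1 - c / log y)))⁻¹ ≤
      exp (16 * exp c * (1 + log (2 * log y))) := by
  set s := 1 - c / log y
  have hs2 : 1 / 2 ≤ s := by
    have : c / log y ≤ 1 / 2 := by rw [div_le_iff₀ (by linarith)]; linarith
    linarith
  have hfactor : ∀ p ∈ Nat.primesBelow ⌈y⌉₊,
      0 ≤ (1 - (p : ℝ) ^ (-s))⁻¹ ∧ (1 - (p : ℝ) ^ (-s))⁻¹ ≤ exp (4 * exp c * (1 / p)) := by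
    intro p hp
    rw [Nat.mem_primesBelow, Nat.lt_ceil] at hp
    have hquarter : (p : ℝ) ^ (-s) ≤ 3 / 4 :=
      rpow_neg_le_three_quarters (by exact_mod_cast hp.2.two_le) hs2
    refine ⟨inv_nonneg.mpr (by linarith), (inv_one_sub_le_exp (by positivity) hquarter).trans ?_⟩
    rw [mul_assoc 4]
    gcongr
    exact rpow_neg_one_sub_div_log_le (by exact_mod_cast hp.2.pos) hp.1.le (by linarith) hc
  calc ∏ p ∈ Nat.primesBelow ⌈y⌉₊, (1 - (p : ℝ) ^ (-s))⁻¹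
      ≤ ∏ p ∈ Nat.primesBelow ⌈y⌉₊, exp (4 * exp c * (1 / p)) :=
        prod_le_prod (fun p hp => (hfactor p hp).1) fun p hp => (hfactor p hp).2
    _ = exp (4 * exp c * ∑ p ∈ Nat.primesBelow ⌈y⌉₊, 1 / (p : ℝ)) := by
        rw [← exp_sum, mul_sum]
    _ ≤ exp (4 * exp c * (4 * (1 + log (2 * log y)))) := by
        gcongr
        exact sum_one_div_primesBelow_ceil_le hy hy0
    _ = exp (16 * exp c * (1 + log (2 * log y))) := by ring_nf

/-- Rankin's upper bound for `∑ 1 / n` over `y`-smooth `n ≥ w`; the parameter `c` is the gain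
`w ^ (-c / log y)`, to be balanced against the constant `exp c`. -/
noncomputable def smoothTailBound (c y w : ℝ) : ℝ :=
  w ^ (-(c / log y)) * exp (16 * exp c * (1 + log (2 * log y)))

theorem sum_one_div_smooth_le {c y w : ℝ} (hy0 : 0 ≤ y) (hy : 1 ≤ log y) (hc : 0 ≤ c)
    (hcy : 2 * c ≤ log y) (hw : 0 < w) {F : Finset ℕ}
    (hF : ∀ n ∈ F, n ∈ Nat.smoothNumbers ⌈y⌉₊ ∧ w ≤ n) :
    ∑ n ∈ F, (1 : ℝ) / n ≤ smoothTailBound c y w := by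
  set η := c / log y with hη
  have hη0 : 0 ≤ η := by positivity
  have hη1 : 0 < 1 - η := by
    have : η ≤ 1 / 2 := by rw [hη, div_le_iff₀ (by linarith)]; linarith
    linarith
  calc ∑ n ∈ F, (1 : ℝ) / n ≤ ∑ n ∈ F, w ^ (-η) * (n : ℝ) ^ (-(1 - η)) := by
        refine sum_le_sum fun n hn => ?_
        have hwn := (hF n hn).2
        have hn0 : (0 : ℝ) < n := hw.trans_le hwn
        calc (1 : ℝ) / n = (n : ℝ) ^ (-η) * (n : ℝ) ^ (-(1 - η)) := by
              rw [← rpow_add hn0, show -η + -(1 - η) = -1 by ring, rpow_neg_one, one_div]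
          _ ≤ w ^ (-η) * (n : ℝ) ^ (-(1 - η)) := by
              gcongr ?_ * _
              exact rpow_le_rpow_of_nonpos hw hwn (by linarith)
    _ = w ^ (-η) * ∑ n ∈ F, (n : ℝ) ^ (-(1 - η)) := (mul_sum ..).symm
    _ ≤ smoothTailBound c y w := by
        rw [smoothTailBound, ← hη]
        gcongr
        exact (sum_rpow_neg_le_prod_inv_one_sub hη1 fun n hn => (hF n hn).1).trans
          (prod_inv_one_sub_rpow_le hy0 hy hc hcy)

/-! ### Counting exceptional integers -/

/-- The number of positive integers `n ≤ X` with the property `P`. -/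
noncomputable def countUpTo (P : ℕ → Prop) (X : ℕ) : ℕ := {n ∈ Set.Ioc 0 X | P n}.ncard

theorem countUpTo_mono {P Q : ℕ → Prop} {X : ℕ} (h : ∀ n, 0 < n → n ≤ X → P n → Q n) :
    countUpTo P X ≤ countUpTo Q X :=
  Set.ncard_le_ncard (fun n hn => ⟨hn.1, h n hn.1.1 hn.1.2 hn.2⟩) ((Set.finite_Ioc 0 X).sep Q)

theorem countUpTo_or_le (P Q : ℕ → Prop) (X : ℕ) :
    countUpTo (fun n => P n ∨ Q n) X ≤ countUpTo P X + countUpTo Q X := by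
  rw [countUpTo, Set.sep_or]
  exact Set.ncard_union_le _ _

theorem countUpTo_eq_zero {P : ℕ → Prop} (h : ∀ n, ¬ P n) (X : ℕ) : countUpTo P X = 0 := by
  simp only [countUpTo, h, and_false, Set.ofPred_false, Set.ncard_empty]

theorem countUpTo_exists_le {ι : Type*} (I : Finset ι) (P : ι → ℕ → Prop) (X : ℕ) :
    countUpTo (fun n => ∃ i ∈ I, P i n) X ≤ ∑ i ∈ I, countUpTo (P i) X := by
  classical
  induction I using Finset.induction_on with
  | empty => exact (countUpTo_eq_zero (by simp) X).le
  | insert i I hi ih =>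
    simp only [exists_mem_insert, sum_insert hi]
    exact (countUpTo_or_le _ _ X).trans (Nat.add_le_add_left ih _)

theorem countUpTo_comp_add_le (P : ℕ → Prop) (k X : ℕ) :
    countUpTo (fun n => P (n + k)) X ≤ countUpTo P (X + k) :=
  Set.ncard_le_ncard_of_injOn (· + k)
    (fun _ hn => ⟨⟨Nat.add_pos_left hn.1.1 k, Nat.add_le_add_right hn.1.2 k⟩, hn.2⟩)
    (add_left_injective k).injOn ((Set.finite_Ioc 0 (X + k)).sep P)

theorem countUpTo_lt_le {w : ℝ} (hw : 0 ≤ w) (X : ℕ) :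
    (countUpTo (fun n => (n : ℝ) < w) X : ℝ) ≤ w := by
  have hsub : {n ∈ Set.Ioc 0 X | (n : ℝ) < w} ⊆ Ioc 0 ⌊w⌋₊ := fun n hn =>
    mem_coe.mpr (mem_Ioc.mpr ⟨hn.1.1, Nat.le_floor hn.2.le⟩)
  have hcard := Set.ncard_le_ncard hsub (finite_toSet _)
  rw [Set.ncard_coe_finset, Nat.card_Ioc, Nat.sub_zero] at hcard
  exact (Nat.cast_le.mpr hcard).trans (Nat.floor_le hw)

theorem countUpTo_dvd (d X : ℕ) : countUpTo (d ∣ ·) X = X / d := by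
  rw [← Nat.Ioc_filter_dvd_card_eq_div, ← Set.ncard_coe_finset, coe_filter]
  simp only [countUpTo, Set.mem_Ioc, mem_Ioc]

theorem countUpTo_exists_dvd_le {ι : Type*} (I : Finset ι) (f : ι → ℕ) (X : ℕ) :
    (countUpTo (fun n => ∃ i ∈ I, f i ∣ n) X : ℝ) ≤ X * ∑ i ∈ I, 1 / (f i : ℝ) := by
  calc (countUpTo (fun n => ∃ i ∈ I, f i ∣ n) X : ℝ) ≤ ∑ i ∈ I, ((X / f i : ℕ) : ℝ) := by
        simp only [← countUpTo_dvd]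
        exact_mod_cast countUpTo_exists_le I (fun i n => f i ∣ n) X
    _ ≤ ∑ i ∈ I, X * (1 / (f i : ℝ)) := by
        gcongr with i
        exact Nat.cast_div_le.trans_eq (mul_one_div _ _).symm
    _ = X * ∑ i ∈ I, 1 / (f i : ℝ) := (mul_sum ..).symm

theorem countUpTo_smooth_le {c y w : ℝ} (hy0 : 0 ≤ y) (hy : 1 ≤ log y) (hc : 0 ≤ c)
    (hcy : 2 * c ≤ log y) (hw : 0 < w) (X : ℕ) :
    (countUpTo (· ∈ Nat.smoothNumbers ⌈y⌉₊) X : ℝ) ≤ w + X * smoothTailBound c y w := by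
  classical
  set F := {m ∈ Ioc 0 X | m ∈ Nat.smoothNumbers ⌈y⌉₊ ∧ w ≤ m}
  have hsplit : countUpTo (· ∈ Nat.smoothNumbers ⌈y⌉₊) X ≤
      countUpTo (fun n => (n : ℝ) < w ∨ ∃ m ∈ F, m ∣ n) X :=
    countUpTo_mono fun n hn hnX hsmooth => (lt_or_ge (n : ℝ) w).imp_right fun hwn =>
      ⟨n, mem_filter.mpr ⟨mem_Ioc.mpr ⟨hn, hnX⟩, hsmooth, hwn⟩, dvd_rfl⟩
  calc (countUpTo (· ∈ Nat.smoothNumbers ⌈y⌉₊) X : ℝ)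
      ≤ countUpTo (fun n => (n : ℝ) < w) X + countUpTo (fun n => ∃ m ∈ F, m ∣ n) X := by
        exact_mod_cast hsplit.trans (countUpTo_or_le _ _ X)
    _ ≤ w + X * ∑ m ∈ F, 1 / (m : ℝ) :=
        add_le_add (countUpTo_lt_le hw.le X) (countUpTo_exists_dvd_le F id X)
    _ ≤ w + X * smoothTailBound c y w := by
        gcongr
        exact sum_one_div_smooth_le hy0 hy hc hcy hw fun m hm => (mem_filter.mp hm).2

theorem sum_one_div_sq_le {z : ℝ} (hz : 0 < z) (M : ℕ) :
    ∑ d ∈ Icc ⌈z⌉₊ M, 1 / (d : ℝ) ^ 2 ≤ 2 / z := by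
  have hpos : 1 ≤ ⌈z⌉₊ := Nat.ceil_pos.mpr hz
  have hIoo : Icc ⌈z⌉₊ M = Ioo (⌈z⌉₊ - 1) (M + 1) := by
    ext d
    rw [mem_Icc, mem_Ioo]
    omega
  calc ∑ d ∈ Icc ⌈z⌉₊ M, 1 / (d : ℝ) ^ 2 ≤ 2 / (((⌈z⌉₊ - 1 : ℕ) : ℝ) + 1) := by
        simpa only [hIoo, one_div] using sum_Ioo_inv_sq_le (α := ℝ) (⌈z⌉₊ - 1) (M + 1)
    _ = 2 / ⌈z⌉₊ := by rw [Nat.cast_sub hpos, Nat.cast_one, sub_add_cancel]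
    _ ≤ 2 / z := by
        gcongr
        exact Nat.le_ceil z

/-- `n` is divisible by the square of some `d ≥ z`. -/
def HasLargeSquareDivisor (z : ℝ) (n : ℕ) : Prop :=
  ∃ d : ℕ, z ≤ d ∧ d ^ 2 ∣ n

theorem countUpTo_hasLargeSquareDivisor_le {z : ℝ} (hz : 0 < z) (X : ℕ) :
    (countUpTo (HasLargeSquareDivisor z) X : ℝ) ≤ X * (2 / z) := by
  have hle : countUpTo (HasLargeSquareDivisor z) X ≤
      countUpTo (fun n => ∃ d ∈ Icc ⌈z⌉₊ X, d ^ 2 ∣ n) X :=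
    countUpTo_mono fun n hn hnX ⟨d, hzd, hdn⟩ => by
      have hdX : d ≤ d ^ 2 := Nat.le_self_pow two_ne_zero d
      have := Nat.le_of_dvd hn hdn
      exact ⟨d, mem_Icc.mpr ⟨Nat.ceil_le.mpr hzd, by omega⟩, hdn⟩
  calc (countUpTo (HasLargeSquareDivisor z) X : ℝ)
      ≤ countUpTo (fun n => ∃ d ∈ Icc ⌈z⌉₊ X, d ^ 2 ∣ n) X := Nat.cast_le.mpr hle
    _ ≤ X * ∑ d ∈ Icc ⌈z⌉₊ X, 1 / ((d ^ 2 : ℕ) : ℝ) := countUpTo_exists_dvd_le _ (· ^ 2) X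
    _ ≤ X * (2 / z) := by
        push_cast
        gcongr
        exact sum_one_div_sq_le hz X

/-- `n` has a prime factor `P ≥ y` for which `P - 1` is `z`-smooth. -/
def HasPrimeWithSmoothPred (y z : ℝ) (n : ℕ) : Prop :=
  ∃ P : ℕ, P.Prime ∧ y ≤ P ∧ P - 1 ∈ Nat.smoothNumbers ⌈z⌉₊ ∧ P ∣ n

theorem countUpTo_hasPrimeWithSmoothPred_le {c y z : ℝ} (hy : 0 < y) (hz0 : 0 ≤ z)
    (hz : 1 ≤ log z) (hc : 0 ≤ c) (hcz : 2 * c ≤ log z) (X : ℕ) :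
    (countUpTo (HasPrimeWithSmoothPred y z) X : ℝ) ≤ X * smoothTailBound c z (y / 2) := by
  classical
  set F := {m ∈ Icc 1 X | m ∈ Nat.smoothNumbers ⌈z⌉₊ ∧ y / 2 ≤ m}
  have hle : countUpTo (HasPrimeWithSmoothPred y z) X ≤
      countUpTo (fun n => ∃ m ∈ F, m + 1 ∣ n) X :=
    countUpTo_mono fun n hn hnX ⟨P, hP, hyP, hsmooth, hPn⟩ => by
      obtain ⟨m, rfl⟩ : ∃ m, P = m + 1 := ⟨P - 1, by have := hP.pos; omega⟩
      have hm : 1 ≤ m := by have := hP.two_le; omega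
      have := Nat.le_of_dvd hn hPn
      refine ⟨m, mem_filter.mpr ⟨mem_Icc.mpr ⟨hm, by omega⟩, hsmooth, ?_⟩, hPn⟩
      have : (1 : ℝ) ≤ m := by exact_mod_cast hm
      push_cast at hyP
      linarith
  calc (countUpTo (HasPrimeWithSmoothPred y z) X : ℝ)
      ≤ countUpTo (fun n => ∃ m ∈ F, m + 1 ∣ n) X := Nat.cast_le.mpr hle
    _ ≤ X * ∑ m ∈ F, 1 / ((m + 1 : ℕ) : ℝ) := countUpTo_exists_dvd_le F (· + 1) X
    _ ≤ X * ∑ m ∈ F, 1 / (m : ℝ) := by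
        gcongr with m hm
        · exact_mod_cast (mem_Icc.mp (mem_filter.mp hm).1).1
        · exact Nat.le_succ m
    _ ≤ X * smoothTailBound c z (y / 2) := by
        gcongr
        exact sum_one_div_smooth_le hz0 hz hc hcz (by linarith) fun m hm => (mem_filter.mp hm).2

theorem countUpTo_dvd_and_dvd_add_le {P Q : ℕ} (hPQ : P.Coprime Q) (k X : ℕ) :
    countUpTo (fun n => P ∣ n ∧ Q ∣ n + k) X ≤ X / (P * Q) + 1 := by
  rw [← card_range (X / (P * Q) + 1), ← Set.ncard_coe_finset]
  refine Set.ncard_le_ncard_of_injOn (· / (P * Q)) (fun n hn => ?_) ?_ (finite_toSet _)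
  · exact mem_coe.mpr (mem_range_succ_iff.mpr (Nat.div_le_div_right hn.1.2))
  · rintro m ⟨-, hPm, hQm⟩ n ⟨-, hPn, hQn⟩ hmn
    have hmodP : m ≡ n [MOD P] :=
      (Nat.modEq_zero_iff_dvd.mpr hPm).trans (Nat.modEq_zero_iff_dvd.mpr hPn).symm
    have hmodQ : m ≡ n [MOD Q] := Nat.ModEq.add_right_cancel' k
      ((Nat.modEq_zero_iff_dvd.mpr hQm).trans (Nat.modEq_zero_iff_dvd.mpr hQn).symm)
    have hmod : m % (P * Q) = n % (P * Q) :=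
      (Nat.modEq_and_modEq_iff_modEq_mul hPQ).mp ⟨hmodP, hmodQ⟩
    have hdiv : m / (P * Q) = n / (P * Q) := hmn
    rw [← Nat.div_add_mod m (P * Q), ← Nat.div_add_mod n (P * Q), hdiv, hmod]

/-- Distinct primes `P ∣ n` and `q ∣ n + k` with `P * q ≤ R` are linked through a common divisor
`r ≥ z` of `P - 1` and `q - 1`. -/
def HasLinkedPrimes (z R : ℝ) (k n : ℕ) : Prop :=
  ∃ r P q : ℕ, z ≤ r ∧ P.Prime ∧ q.Prime ∧ P ≠ q ∧ r ∣ P - 1 ∧ r ∣ q - 1 ∧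
    P ∣ n ∧ q ∣ n + k ∧ (P * q : ℝ) ≤ R

theorem HasLinkedPrimes.exists_coprime_progressions {z R : ℝ} {k n X : ℕ} (hn : 0 < n)
    (hnX : n ≤ X) (h : HasLinkedPrimes z R k n) :
    ∃ r ∈ Icc ⌈z⌉₊ (X + k), ∃ i ∈ Icc 1 (X + k), ∃ j ∈ Icc 1 (X + k),
      ((1 + r * i).Coprime (1 + r * j) ∧ ((1 + r * i) * (1 + r * j) : ℝ) ≤ R) ∧
        1 + r * i ∣ n ∧ 1 + r * j ∣ n + k := by
  obtain ⟨r, P, q, hzr, hP, hq, hPq, ⟨i, hi⟩, ⟨j, hj⟩, hPn, hqn, hR⟩ := h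
  have hP2 := hP.two_le
  have hq2 := hq.two_le
  obtain rfl : P = 1 + r * i := by omega
  obtain rfl : q = 1 + r * j := by omega
  have hri : 0 < r * i := by omega
  have hrj : 0 < r * j := by omega
  have hr : r ≤ r * i := Nat.le_mul_of_pos_right r (Nat.pos_of_mul_pos_left hri)
  have hir : i ≤ r * i := Nat.le_mul_of_pos_left i (Nat.pos_of_mul_pos_right hri)
  have hjr : j ≤ r * j := Nat.le_mul_of_pos_left j (Nat.pos_of_mul_pos_right hrj)
  have := Nat.le_of_dvd hn hPn
  have := Nat.le_of_dvd (Nat.add_pos_left hn k) hqn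
  refine ⟨r, mem_Icc.mpr ⟨Nat.ceil_le.mpr hzr, by omega⟩,
    i, mem_Icc.mpr ⟨Nat.pos_of_mul_pos_left hri, by omega⟩,
    j, mem_Icc.mpr ⟨Nat.pos_of_mul_pos_left hrj, by omega⟩,
    ⟨(Nat.coprime_primes hP hq).mpr hPq, by exact_mod_cast hR⟩, hPn, hqn⟩

theorem countUpTo_coprime_progressions_le {R : ℝ} {r i j : ℕ} (hr : 0 < r) (hi : 0 < i)
    (hj : 0 < j) (hcop : (1 + r * i).Coprime (1 + r * j))
    (hR : ((1 + r * i) * (1 + r * j) : ℝ) ≤ R) (k X : ℕ) :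
    (countUpTo (fun n => 1 + r * i ∣ n ∧ 1 + r * j ∣ n + k) X : ℝ) ≤
      (X + R) * (1 / (r : ℝ) ^ 2 * (1 / i * (1 / j))) := by
  have hpos : (0 : ℝ) < (1 + r * i) * (1 + r * j) := by positivity
  calc (countUpTo (fun n => 1 + r * i ∣ n ∧ 1 + r * j ∣ n + k) X : ℝ)
      ≤ ((X / ((1 + r * i) * (1 + r * j)) : ℕ) : ℝ) + 1 := by
        exact_mod_cast countUpTo_dvd_and_dvd_add_le hcop k X
    _ ≤ X / ((1 + r * i) * (1 + r * j)) + R / ((1 + r * i) * (1 + r * j)) := by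
        gcongr
        · exact_mod_cast Nat.cast_div_le (α := ℝ)
        · exact (one_le_div₀ hpos).mpr hR
    _ = (X + R) * (1 / ((1 + r * i) * (1 + r * j))) := by ring
    _ ≤ (X + R) * (1 / ((r * i) * (r * j))) := by
        have : 0 ≤ R := hpos.le.trans hR
        gcongr <;> linarith
    _ = (X + R) * (1 / (r : ℝ) ^ 2 * (1 / i * (1 / j))) := by field_simp

theorem countUpTo_hasLinkedPrimes_le {z R : ℝ} (hz : 0 < z) (hR : 0 ≤ R) (k X : ℕ) :
    (countUpTo (HasLinkedPrimes z R k) X : ℝ) ≤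
      (X + R) * (2 / z * (1 + log (X + k : ℕ)) ^ 2) := by
  classical
  set M := X + k
  set I := Icc ⌈z⌉₊ M ×ˢ Icc 1 M ×ˢ Icc 1 M with hI
  let admissible (t : ℕ × ℕ × ℕ) : Prop := (1 + t.1 * t.2.1).Coprime (1 + t.1 * t.2.2) ∧
    ((1 + t.1 * t.2.1) * (1 + t.1 * t.2.2) : ℝ) ≤ R
  let E (t : ℕ × ℕ × ℕ) (n : ℕ) : Prop := 1 + t.1 * t.2.1 ∣ n ∧ 1 + t.1 * t.2.2 ∣ n + k
  let weight (t : ℕ × ℕ × ℕ) : ℝ :=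
    (X + R) * (1 / (t.1 : ℝ) ^ 2 * (1 / (t.2.1 : ℝ) * (1 / (t.2.2 : ℝ))))
  have hunion : countUpTo (HasLinkedPrimes z R k) X ≤ ∑ t ∈ I with admissible t,
      countUpTo (E t) X := by
    refine (countUpTo_mono fun n hn hnX h => ?_).trans (countUpTo_exists_le _ E X)
    obtain ⟨r, hr, i, hi, j, hj, hadm, hE⟩ := h.exists_coprime_progressions hn hnX
    exact ⟨(r, i, j), mem_filter.mpr ⟨mk_mem_product hr (mk_mem_product hi hj), hadm⟩, hE⟩
  have hterm : ∀ t ∈ I, admissible t → (countUpTo (E t) X : ℝ) ≤ weight t := by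
    rintro ⟨r, i, j⟩ ht hadm
    simp only [hI, mem_product, mem_Icc, Nat.ceil_le] at ht
    exact countUpTo_coprime_progressions_le (by exact_mod_cast hz.trans_le ht.1.1) ht.2.1.1
      ht.2.2.1 hadm.1 hadm.2 k X
  calc (countUpTo (HasLinkedPrimes z R k) X : ℝ)
      ≤ ∑ t ∈ I with admissible t, (countUpTo (E t) X : ℝ) := by exact_mod_cast hunion
    _ ≤ ∑ t ∈ I with admissible t, weight t :=
        sum_le_sum fun t ht => hterm t (mem_filter.mp ht).1 (mem_filter.mp ht).2
    _ ≤ ∑ t ∈ I, weight t :=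
        sum_le_sum_of_subset_of_nonneg (filter_subset _ _) fun _ _ _ => by positivity
    _ = (X + R) * ((∑ r ∈ Icc ⌈z⌉₊ M, 1 / (r : ℝ) ^ 2) *
          ((∑ i ∈ Icc 1 M, 1 / (i : ℝ)) * ∑ j ∈ Icc 1 M, 1 / (j : ℝ))) := by
        rw [← mul_sum, sum_mul_sum, ← sum_product', sum_mul_sum, ← sum_product']
    _ ≤ (X + R) * (2 / z * ((1 + log M) * (1 + log M))) := by
        have := sum_one_div_Icc_le M
        gcongr
        exact sum_one_div_sq_le hz M
    _ = (X + R) * (2 / z * (1 + log M) ^ 2) := by rw [← sq]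

theorem prime_mul_totient_sub_eq {n k a P b q : ℕ} (hn : SplitsOffPrime n a P)
    (hm : SplitsOffPrime (n + k) b q) (h : φ n = φ (n + k)) :
    (P : ℤ) * (b * φ a - a * φ b) = b * φ a + φ b * (k - b) := by
  have htot : (φ a * (P - 1) : ℤ) = φ b * (q - 1) := by
    rw [hn.totient_eq, hm.totient_eq] at h
    have := congrArg (Nat.cast : ℕ → ℤ) h
    rwa [Nat.cast_mul, Nat.cast_mul, Nat.cast_pred hn.prime.pos, Nat.cast_pred hm.prime.pos] at this
  have hadd : (a * P + k : ℤ) = b * q := by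
    exact_mod_cast hn.eq_mul ▸ hm.eq_mul
  linear_combination (b : ℤ) * htot - φ b * hadd

theorem countUpTo_cofactors_le_one {a b : ℕ} (hab : b * φ a ≠ a * φ b) (k X : ℕ) :
    countUpTo (fun n => (∃ P q, SplitsOffPrime n a P ∧ SplitsOffPrime (n + k) b q) ∧
      φ n = φ (n + k)) X ≤ 1 := by
  rw [countUpTo, Set.ncard_le_one ((Set.finite_Ioc 0 X).sep _)]
  rintro n ⟨-, ⟨P, q, hnP, hnq⟩, hn⟩ m ⟨-, ⟨P', q', hmP, hmq⟩, hm⟩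
  have hab' : (b * φ a - a * φ b : ℤ) ≠ 0 := sub_ne_zero.mpr (by exact_mod_cast hab)
  have hPP' : (P : ℤ) = P' := mul_right_cancel₀ hab' <|
    (prime_mul_totient_sub_eq hnP hnq hn).trans (prime_mul_totient_sub_eq hmP hmq hm).symm
  rw [hnP.eq_mul, hmP.eq_mul, Nat.cast_injective hPP']

/-- `n` and `n + k` split off primes so that the product of the cofactors `a`, `b` is at most `T`
and `φ a / a ≠ φ b / b`. -/
def HasSmallCofactors (T : ℝ) (k n : ℕ) : Prop :=
  ∃ a P b q, SplitsOffPrime n a P ∧ SplitsOffPrime (n + k) b q ∧ (a * b : ℝ) ≤ T ∧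
    b * φ a ≠ a * φ b

theorem countUpTo_hasSmallCofactors_le {T : ℝ} (hT : 1 ≤ T) (k X : ℕ) :
    (countUpTo (fun n => φ n = φ (n + k) ∧ HasSmallCofactors T k n) X : ℝ) ≤
      T * (1 + log T) := by
  set N := ⌊T⌋₊
  have hNT : (N : ℝ) ≤ T := Nat.floor_le (by linarith)
  have hN : 0 < N := Nat.floor_pos.mpr hT
  let E (a b n : ℕ) : Prop := b * φ a ≠ a * φ b ∧
    (∃ P q, SplitsOffPrime n a P ∧ SplitsOffPrime (n + k) b q) ∧ φ n = φ (n + k)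
  have hE (a b : ℕ) : countUpTo (E a b) X ≤ 1 := by
    by_cases hab : b * φ a = a * φ b
    · exact (countUpTo_eq_zero (fun n h => h.1 hab) X).trans_le zero_le_one
    · exact (countUpTo_mono fun n _ _ h => h.2).trans (countUpTo_cofactors_le_one hab k X)
  have hcover : countUpTo (fun n => φ n = φ (n + k) ∧ HasSmallCofactors T k n) X ≤
      countUpTo (fun n => ∃ a ∈ Icc 1 N, ∃ b ∈ Icc 1 (N / a), E a b n) X :=
    countUpTo_mono fun n _ _ ⟨hφ, a, P, b, q, hn, hm, hab, hne⟩ => by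
      have habN : b * a ≤ N := Nat.le_floor (by push_cast; linarith)
      have haN : a ≤ N := (Nat.le_mul_of_pos_left a hm.cofactor_pos).trans habN
      exact ⟨a, mem_Icc.mpr ⟨hn.cofactor_pos, haN⟩,
        b, mem_Icc.mpr ⟨hm.cofactor_pos, (Nat.le_div_iff_mul_le hn.cofactor_pos).mpr habN⟩,
        hne, ⟨P, q, hn, hm⟩, hφ⟩
  have hcount : countUpTo (fun n => φ n = φ (n + k) ∧ HasSmallCofactors T k n) X ≤
      ∑ a ∈ Icc 1 N, N / a :=
    hcover.trans <| (countUpTo_exists_le _ _ X).trans <| sum_le_sum fun a _ => by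
      simpa using (countUpTo_exists_le _ (E a) X).trans
        (sum_le_card_nsmul (Icc 1 (N / a)) _ 1 fun b _ => hE a b)
  calc (countUpTo (fun n => φ n = φ (n + k) ∧ HasSmallCofactors T k n) X : ℝ)
      ≤ ∑ a ∈ Icc 1 N, ((N / a : ℕ) : ℝ) := by exact_mod_cast hcount
    _ ≤ ∑ a ∈ Icc 1 N, N * (1 / (a : ℝ)) := by
        gcongr with a
        exact Nat.cast_div_le.trans_eq (mul_one_div _ _).symm
    _ = N * ∑ a ∈ Icc 1 N, 1 / (a : ℝ) := (mul_sum ..).symm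
    _ ≤ T * (1 + log T) := by
        gcongr
        · exact (sum_one_div_Icc_le N).trans (by gcongr)

/-! ### Classification of the solutions -/

theorem sq_dvd_or_exists_dvd_pred_of_prime_dvd_totient {r m : ℕ} (hm : m ≠ 0) (hr : r.Prime)
    (h : r ∣ φ m) : r ^ 2 ∣ m ∨ ∃ q : ℕ, q.Prime ∧ q ∣ m ∧ r ∣ q - 1 := by
  rw [Nat.totient_eq_prod_factorization hm, Finsupp.prod] at h
  obtain ⟨q, hq, hrq⟩ := (Prime.dvd_finsetProd_iff hr.prime _).mp h
  have hqp := Nat.prime_of_mem_primeFactors hq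
  rcases hr.dvd_mul.mp hrq with hpow | hpred
  · left
    obtain rfl := (Nat.prime_dvd_prime_iff_eq hr hqp).mp (hr.dvd_of_dvd_pow hpow)
    rw [hr.pow_dvd_iff_le_factorization hm]
    by_contra! hlt
    rw [Nat.sub_eq_zero_of_le (by omega), pow_zero] at hpow
    exact hr.not_dvd_one hpow
  · exact Or.inr ⟨q, hqp, Nat.dvd_of_mem_primeFactors hq, hpred⟩

theorem exists_prime_dvd_of_notMem_smoothNumbers {y : ℝ} {n : ℕ}
    (h : n ∉ Nat.smoothNumbers ⌈y⌉₊) : ∃ p : ℕ, p.Prime ∧ p ∣ n ∧ y ≤ p := by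
  rw [Nat.mem_smoothNumbers'] at h
  push Not at h
  obtain ⟨p, hp, hpn, hyp⟩ := h
  exact ⟨p, hp, hpn, Nat.ceil_le.mp hyp⟩

theorem exists_linked_splittings {y z : ℝ} {k n : ℕ} (hk : 0 < k) (hky : k < y) (hn : 0 < n)
    (h : φ n = φ (n + k)) (hsmooth : n ∉ Nat.smoothNumbers ⌈y⌉₊)
    (hsq : ¬ HasLargeSquareDivisor z n) (hsq' : ¬ HasLargeSquareDivisor z (n + k))
    (hpred : ¬ HasPrimeWithSmoothPred y z n) :
    ∃ r a P b q, z ≤ (r : ℕ) ∧ SplitsOffPrime n a P ∧ SplitsOffPrime (n + k) b q ∧ P ≠ q ∧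
      r ∣ P - 1 ∧ r ∣ q - 1 := by
  have le_of_dvd_pred {r p : ℕ} (hzr : z ≤ r) (hp : p.Prime) (hr : r ∣ p - 1) : z ≤ p :=
    hzr.trans <| Nat.cast_le.mpr <|
      (Nat.le_of_dvd (Nat.sub_pos_of_lt hp.one_lt) hr).trans (Nat.sub_le p 1)
  obtain ⟨P, hP, hPn, hyP⟩ := exists_prime_dvd_of_notMem_smoothNumbers hsmooth
  obtain ⟨r, hr, hrP, hzr⟩ := exists_prime_dvd_of_notMem_smoothNumbers
    fun hs => hpred ⟨P, hP, hyP, hs, hPn⟩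
  obtain ⟨a, hnP⟩ := exists_splitsOffPrime hP hPn fun hd => hsq ⟨P, le_of_dvd_pred hzr hP hrP, hd⟩
  have hrφ : r ∣ φ (n + k) := h ▸ hnP.totient_eq ▸ hrP.mul_left (φ a)
  obtain ⟨q, hq, hqn, hrq⟩ := (sq_dvd_or_exists_dvd_pred_of_prime_dvd_totient
    (Nat.add_pos_left hn k).ne' hr hrφ).resolve_left fun hd => hsq' ⟨r, hzr, hd⟩
  obtain ⟨b, hnq⟩ := exists_splitsOffPrime hq hqn fun hd => hsq' ⟨q, le_of_dvd_pred hzr hq hrq, hd⟩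
  refine ⟨r, a, P, b, q, hzr, hnP, hnq, ?_, hrP, hrq⟩
  rintro rfl
  have : P ≤ k := Nat.le_of_dvd hk ((Nat.dvd_add_right hPn).mp hqn)
  exact absurd (hky.trans_le hyP) (not_lt.mpr (Nat.cast_le.mpr this))

theorem hasLinkedPrimes_or_hasSmallCofactors {z R T : ℝ} {k n r a P b q : ℕ} (hz : 3 ≤ z)
    (hR : 0 < R) (hTR : (n * (n + k) : ℝ) ≤ T * R) (hndeg : ¬ IsDegenerate k n) (hzr : z ≤ r)
    (hn : SplitsOffPrime n a P) (hm : SplitsOffPrime (n + k) b q) (hPq : P ≠ q)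
    (hrP : r ∣ P - 1) (hrq : r ∣ q - 1) : HasLinkedPrimes z R k n ∨ HasSmallCofactors T k n := by
  have hr : 3 ≤ r := by exact_mod_cast hz.trans hzr
  have three_lt {p : ℕ} (hp : p.Prime) (hrp : r ∣ p - 1) : 3 < p := by
    have := Nat.le_of_dvd (Nat.sub_pos_of_lt hp.one_lt) hrp
    omega
  rcases le_or_gt (P * q : ℝ) R with hPqR | hPqR
  · exact Or.inl ⟨r, P, q, hzr, hn.prime, hm.prime, hPq, hrP, hrq,
      ⟨a, hn.eq_mul.trans (mul_comm a P)⟩, ⟨b, hm.eq_mul.trans (mul_comm b q)⟩, hPqR⟩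
  · refine Or.inr ⟨a, P, b, q, hn, hm, le_of_mul_le_mul_right ?_ hR, fun hab => hndeg
      ⟨a, P, b, q, hn, hm, three_lt hn.prime hrP, three_lt hm.prime hrq, hab⟩⟩
    have hn' : (n : ℝ) = a * P := by exact_mod_cast hn.eq_mul
    have hm' : (n + k : ℝ) = b * q := by exact_mod_cast hm.eq_mul
    calc (a * b : ℝ) * R ≤ a * b * (P * q) := by gcongr
      _ = n * (n + k) := by rw [hm', hn']; ring
      _ ≤ T * R := hTR

/-- A solution of `φ n = φ (n + k)` which is not degenerate; these are the solutions that the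
Graham–Holt–Pomerance argument shows to be rare. -/
def IsNondegenerateSolution (k n : ℕ) : Prop :=
  φ n = φ (n + k) ∧ ¬ IsDegenerate k n

theorem IsNondegenerateSolution.cases {y z R T : ℝ} {k n : ℕ} (h : IsNondegenerateSolution k n)
    (hk : 0 < k) (hky : k < y) (hz : 3 ≤ z) (hR : 0 < R) (hn : 0 < n)
    (hTR : (n * (n + k) : ℝ) ≤ T * R) :
    n ∈ Nat.smoothNumbers ⌈y⌉₊ ∨ HasLargeSquareDivisor z n ∨ HasLargeSquareDivisor z (n + k) ∨
      HasPrimeWithSmoothPred y z n ∨ HasLinkedPrimes z R k n ∨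
        (φ n = φ (n + k) ∧ HasSmallCofactors T k n) := by
  by_cases hsmooth : n ∈ Nat.smoothNumbers ⌈y⌉₊
  · exact Or.inl hsmooth
  by_cases hsq : HasLargeSquareDivisor z n
  · exact Or.inr (Or.inl hsq)
  by_cases hsq' : HasLargeSquareDivisor z (n + k)
  · exact Or.inr (Or.inr (Or.inl hsq'))
  by_cases hpred : HasPrimeWithSmoothPred y z n
  · exact Or.inr (Or.inr (Or.inr (Or.inl hpred)))
  obtain ⟨r, a, P, b, q, hzr, hnP, hnq, hPq, hrP, hrq⟩ :=
    exists_linked_splittings hk hky hn h.1 hsmooth hsq hsq' hpred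
  exact Or.inr <| Or.inr <| Or.inr <| Or.inr <| Or.imp_right (⟨h.1, ·⟩) <|
    hasLinkedPrimes_or_hasSmallCofactors hz hR hTR h.2 hzr hnP hnq hPq hrP hrq

theorem countUpTo_isNondegenerateSolution_le_add {y z R T : ℝ} {k X : ℕ} (hk : 0 < k)
    (hky : k < y) (hz : 3 ≤ z) (hR : 0 < R) (hTR : (X * (X + k) : ℝ) ≤ T * R) :
    countUpTo (IsNondegenerateSolution k) X ≤
      countUpTo (· ∈ Nat.smoothNumbers ⌈y⌉₊) X + (countUpTo (HasLargeSquareDivisor z) X +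
        (countUpTo (HasLargeSquareDivisor z) (X + k) + (countUpTo (HasPrimeWithSmoothPred y z) X +
          (countUpTo (HasLinkedPrimes z R k) X +
            countUpTo (fun n => φ n = φ (n + k) ∧ HasSmallCofactors T k n) X)))) := by
  grw [← countUpTo_comp_add_le, ← countUpTo_or_le, ← countUpTo_or_le, ← countUpTo_or_le,
    ← countUpTo_or_le, ← countUpTo_or_le]
  refine countUpTo_mono fun n hn hnX h => h.cases hk hky hz hR hn (hTR.trans' ?_)
  have : (n : ℝ) ≤ X := Nat.cast_le.mpr hnX
  gcongr

theorem countUpTo_isNondegenerateSolution_le {c w y z R T : ℝ} {k X : ℕ} (hk : 0 < k)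
    (hky : k < y) (hz : 3 ≤ z) (hR : 0 < R) (hT : 1 ≤ T) (hTR : (X * (X + k) : ℝ) ≤ T * R)
    (hc : 0 ≤ c) (hy : 1 ≤ log y) (hcy : 2 * c ≤ log y) (hcz : 2 * c ≤ log z) (hw : 0 < w) :
    (countUpTo (IsNondegenerateSolution k) X : ℝ) ≤
      (w + X * smoothTailBound c y w) + (X * (2 / z) + ((X + k : ℕ) * (2 / z) +
        (X * smoothTailBound c z (y / 2) +
          ((X + R) * (2 / z * (1 + log (X + k : ℕ)) ^ 2) + T * (1 + log T))))) := by
  have hy0 : 0 < y := k.cast_nonneg.trans_lt hky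
  have hz0 : 0 < z := by linarith
  have hz1 : 1 ≤ log z := (le_log_iff_exp_le hz0).mpr (exp_one_lt_three.le.trans hz)
  grw [countUpTo_isNondegenerateSolution_le_add hk hky hz hR hTR, Nat.cast_add, Nat.cast_add,
    Nat.cast_add, Nat.cast_add, Nat.cast_add, countUpTo_smooth_le hy0.le hy hc hcy hw,
    countUpTo_hasLargeSquareDivisor_le hz0 X, countUpTo_hasLargeSquareDivisor_le hz0 (X + k),
    countUpTo_hasPrimeWithSmoothPred_le hy0 hz0.le hz1 hc hcz,
    countUpTo_hasLinkedPrimes_le hz0 hR.le, countUpTo_hasSmallCofactors_le hT]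

/-! ### Choice of parameters -/

theorem eventually_const_mul_one_add_log_le {K : ℝ} (hK : 0 < K) :
    ∀ᶠ l : ℝ in atTop, K * (1 + log (2 * l ^ 2)) ≤ l / 2 := by
  have hlittle := isLittleO_log_id_atTop.bound (show 0 < 1 / (8 * K) by positivity)
  filter_upwards [hlittle, eventually_ge_atTop 1, eventually_ge_atTop (8 * K)] with l hl hl1 hlK
  rw [id, norm_of_nonneg (log_nonneg hl1), norm_of_nonneg (by linarith)] at hl
  have hlog : log (2 * l ^ 2) ≤ 1 + 2 * log l := by
    rw [log_mul two_ne_zero (by positivity), log_pow, Nat.cast_two]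
    linarith [log_two_lt_d9]
  have hKl : K * log l ≤ l / 8 := by
    calc K * log l ≤ K * (1 / (8 * K) * l) := by gcongr
      _ = l / 8 := by field_simp
  calc K * (1 + log (2 * l ^ 2)) ≤ K * (1 + (1 + 2 * log l)) := by gcongr
    _ ≤ l / 2 := by linarith

theorem eventually_sq_two_add_cube_le_exp : ∀ᶠ l : ℝ in atTop, (2 + l ^ 3) ^ 2 ≤ exp l := by
  filter_upwards [(isLittleO_pow_exp_atTop (n := 7)).bound one_pos, eventually_ge_atTop 4]
    with l hl hl4
  rw [norm_of_nonneg (by positivity), norm_of_nonneg (by positivity), one_mul] at hl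
  have hcube : 2 ≤ l ^ 3 := by
    calc (2 : ℝ) ≤ 4 ^ 3 := by norm_num
      _ ≤ l ^ 3 := by gcongr
  calc (2 + l ^ 3) ^ 2 ≤ (l ^ 3 + l ^ 3) ^ 2 := by gcongr
    _ = 4 * l ^ 6 := by ring
    _ ≤ l * l ^ 6 := by gcongr
    _ = l ^ 7 := by ring
    _ ≤ exp l := hl

/-- The scale `l = (log x) ^ (1 / 3)` is so large that the lower-order factors in the bounds above
are absorbed by powers of `exp l`; here `8` is the value chosen for Rankin's parameter. -/
structure IsLargeScale (l : ℝ) : Prop where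
  sixteen_le : 16 ≤ l
  log_le : 16 * exp 8 * (1 + log (2 * l ^ 2)) ≤ l / 2
  sq_le_exp : (2 + l ^ 3) ^ 2 ≤ exp l

theorem eventually_isLargeScale : ∀ᶠ l : ℝ in atTop, IsLargeScale l := by
  filter_upwards [eventually_ge_atTop 16,
    eventually_const_mul_one_add_log_le (K := 16 * exp 8) (by positivity),
    eventually_sq_two_add_cube_le_exp] with l h16 hlog hsq
  exact ⟨h16, hlog, hsq⟩

theorem smoothTailBound_le_exp_neg {c y w l : ℝ} (hw : 0 < w)
    (h : l + 16 * exp c * (1 + log (2 * log y)) ≤ log w * (c / log y)) :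
    smoothTailBound c y w ≤ exp (-l) := by
  rw [smoothTailBound, rpow_def_of_pos hw, ← exp_add, exp_le_exp]
  linarith

theorem IsLargeScale.smoothTailBound_sq_le {l : ℝ} (h : IsLargeScale l) :
    smoothTailBound 8 (exp (l ^ 2)) (exp (l ^ 3 - l)) ≤ exp (-l) := by
  apply smoothTailBound_le_exp_neg (exp_pos _)
  rw [log_exp, log_exp]
  have hl := h.sixteen_le
  have hdiv : 8 / l ≤ 1 := by rw [div_le_one (by linarith)]; linarith
  calc l + 16 * exp 8 * (1 + log (2 * l ^ 2)) ≤ l + l / 2 := by gcongr; exact h.log_le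
    _ ≤ 8 * l - 8 / l := by linarith
    _ = (l ^ 3 - l) * (8 / l ^ 2) := by field_simp

theorem IsLargeScale.smoothTailBound_four_mul_le {l : ℝ} (h : IsLargeScale l) :
    smoothTailBound 8 (exp (4 * l)) (exp (l ^ 2) / 2) ≤ exp (-l) := by
  apply smoothTailBound_le_exp_neg (by positivity)
  rw [log_div (exp_ne_zero _) two_ne_zero, log_exp, log_exp]
  have hl := h.sixteen_le
  have hlog : log (2 * (4 * l)) ≤ log (2 * l ^ 2) := by gcongr; nlinarith
  calc l + 16 * exp 8 * (1 + log (2 * (4 * l))) ≤ l + 16 * exp 8 * (1 + log (2 * l ^ 2)) := by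
        gcongr
    _ ≤ l + l / 2 := by gcongr; exact h.log_le
    _ ≤ (l ^ 2 - 1) * (8 / (4 * l)) := by
        rw [← mul_div_assoc, le_div_iff₀ (by linarith)]
        nlinarith
    _ ≤ (l ^ 2 - log 2) * (8 / (4 * l)) := by
        gcongr
        linarith [log_two_lt_d9]

theorem one_add_log_le_two_add_cube {l t : ℝ} (ht0 : 0 < t) (ht : t ≤ 2 * exp (l ^ 3)) :
    1 + log t ≤ 2 + l ^ 3 := by
  have hlog := log_le_log ht0 ht
  rw [log_mul two_ne_zero (exp_ne_zero _), log_exp] at hlog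
  linarith [log_two_lt_d9]

theorem IsLargeScale.one_add_log_sq_le {l t : ℝ} (h : IsLargeScale l) (ht1 : 1 ≤ t)
    (ht : t ≤ 2 * exp (l ^ 3)) : (1 + log t) ^ 2 ≤ exp l := by
  have := log_nonneg ht1
  grw [one_add_log_le_two_add_cube (zero_lt_one.trans_le ht1) ht, h.sq_le_exp]

theorem IsLargeScale.linked_term_le {l X N : ℝ} (h : IsLargeScale l) (hX : X ≤ exp (l ^ 3))
    (hN1 : 1 ≤ N) (hN : N ≤ 2 * exp (l ^ 3)) :
    (X + exp (l ^ 3 + 2 * l)) * (2 / exp (4 * l) * (1 + log N) ^ 2) ≤ 4 * exp (l ^ 3 - l) := by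
  have hl := h.sixteen_le
  calc (X + exp (l ^ 3 + 2 * l)) * (2 / exp (4 * l) * (1 + log N) ^ 2)
      ≤ (exp (l ^ 3 + 2 * l) + exp (l ^ 3 + 2 * l)) * (2 / exp (4 * l) * exp l) := by
        gcongr
        · exact hX.trans (exp_le_exp.mpr (by linarith))
        · exact h.one_add_log_sq_le hN1 hN
    _ = 4 * (exp (l ^ 3 + 2 * l) / exp (4 * l) * exp l) := by ring
    _ = 4 * exp (l ^ 3 - l) := by rw [← exp_sub, ← exp_add]; ring_nf

theorem IsLargeScale.two_mul_le_cube {l : ℝ} (h : IsLargeScale l) : 2 * l ≤ l ^ 3 := by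
  have hl := h.sixteen_le
  calc 2 * l ≤ l ^ 2 * l := by gcongr; nlinarith
    _ = l ^ 3 := by ring

theorem IsLargeScale.one_le_two_mul_exp {l : ℝ} (h : IsLargeScale l) :
    1 ≤ 2 * exp (l ^ 3 - 2 * l) := by
  linarith [one_le_exp (sub_nonneg.mpr h.two_mul_le_cube)]

theorem IsLargeScale.cofactor_term_le {l : ℝ} (h : IsLargeScale l) :
    2 * exp (l ^ 3 - 2 * l) * (1 + log (2 * exp (l ^ 3 - 2 * l))) ≤ 2 * exp (l ^ 3 - l) := by
  have hl := h.sixteen_le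
  have hlog := log_nonneg h.one_le_two_mul_exp
  have hsq := h.one_add_log_sq_le h.one_le_two_mul_exp (by gcongr; linarith)
  calc 2 * exp (l ^ 3 - 2 * l) * (1 + log (2 * exp (l ^ 3 - 2 * l)))
      ≤ 2 * exp (l ^ 3 - 2 * l) * exp l := by
        gcongr
        exact (le_self_pow₀ (by linarith) two_ne_zero).trans hsq
    _ = 2 * exp (l ^ 3 - l) := by rw [mul_assoc, ← exp_add]; ring_nf

/- With `x = exp (l ^ 3)` the parameters are `y = exp (l ^ 2)`, `z = exp (4 * l)`, `w = x / exp l`,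
`R = x * exp (2 * l)` and `T = 2 * x / exp (2 * l)`. -/
theorem IsLargeScale.countUpTo_le {l : ℝ} (h : IsLargeScale l) {k : ℕ}
    (hk : 0 < k) (hkl : k ≤ l) :
    (countUpTo (IsNondegenerateSolution k) ⌊exp (l ^ 3)⌋₊ : ℝ) ≤ 15 * exp (l ^ 3 - l) := by
  have hl := h.sixteen_le
  have hl2 : 16 * l ≤ l ^ 2 := by nlinarith
  have hl3 : 16 * l ^ 2 ≤ l ^ 3 := by nlinarith
  set X := ⌊exp (l ^ 3)⌋₊
  have hX : (X : ℝ) ≤ exp (l ^ 3) := Nat.floor_le (exp_pos _).le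
  have hkexp {t : ℝ} (ht : l ≤ t) : k < exp t := by linarith [add_one_le_exp t]
  have hN : ((X + k : ℕ) : ℝ) ≤ 2 * exp (l ^ 3) := by
    push_cast
    linarith [hkexp (t := l ^ 3) (by linarith)]
  have hN1 : (1 : ℝ) ≤ (X + k : ℕ) := by exact_mod_cast Nat.le_add_left_of_le hk
  have hz : 2 / exp (4 * l) ≤ 2 * exp (-l) := by
    rw [div_eq_mul_inv, ← exp_neg]
    gcongr
    linarith
  have hTR : (X * (X + k) : ℝ) ≤ 2 * exp (l ^ 3 - 2 * l) * exp (l ^ 3 + 2 * l) := by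
    calc (X * (X + k) : ℝ) ≤ exp (l ^ 3) * (2 * exp (l ^ 3)) := by
          gcongr
          exact_mod_cast hN
      _ = 2 * exp (l ^ 3 - 2 * l) * exp (l ^ 3 + 2 * l) := by
          rw [mul_left_comm, mul_assoc, ← exp_add, ← exp_add]; ring_nf
  have hbound := countUpTo_isNondegenerateSolution_le (c := 8) (w := exp (l ^ 3 - l)) hk
    (hkexp (t := l ^ 2) (by linarith)) (z := exp (4 * l)) (by linarith [add_one_le_exp (4 * l)])
    (exp_pos _) h.one_le_two_mul_exp hTR (by norm_num) (by rw [log_exp]; linarith)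
    (by rw [log_exp]; linarith) (by rw [log_exp]; linarith) (exp_pos _)
  grw [hbound, h.smoothTailBound_sq_le, h.smoothTailBound_four_mul_le, h.linked_term_le hX hN1 hN,
    h.cofactor_term_le, hz, hN, hX]
  rw [sub_eq_add_neg, exp_add]
  linarith

theorem eventually_countUpTo_isNondegenerateSolution_le {k : ℕ} (hk : 0 < k) :
    ∀ᶠ x : ℝ in atTop, (countUpTo (IsNondegenerateSolution k) ⌊x⌋₊ : ℝ) ≤
      15 * x / exp (log x ^ ((1 : ℝ) / 3)) := by
  have hscale : Tendsto (fun x => log x ^ ((1 : ℝ) / 3)) atTop atTop :=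
    (tendsto_rpow_atTop (by norm_num)).comp tendsto_log_atTop
  filter_upwards [hscale.eventually eventually_isLargeScale,
    hscale.eventually_ge_atTop (k : ℝ), eventually_ge_atTop 1] with x hlarge hkl hx
  have hcube : (log x ^ ((1 : ℝ) / 3)) ^ 3 = log x := by
    rw [← rpow_natCast, ← rpow_mul (log_nonneg hx)]; norm_num
  have hbound := hlarge.countUpTo_le hk hkl
  rwa [hcube, exp_sub, exp_log (by linarith), ← mul_div_assoc] at hbound

theorem isNondegenerateSolution_sub_of_prime {ℓ p : ℕ} (hℓ : 0 < ℓ)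
    (h4 : ¬ ∃ n : ℕ, 1 ≤ n ∧ ℓ = 4 ^ n - 1) (hp : p.Prime) (hℓp : ℓ < p)
    (h : φ (p - ℓ) = φ (p + ℓ)) : IsNondegenerateSolution (2 * ℓ) (p - ℓ) := by
  have hadd : p - ℓ + 2 * ℓ = p + ℓ := by omega
  rw [← hadd] at h
  exact ⟨h, not_isDegenerate_of_prime_add hℓ h4 (by rwa [Nat.sub_add_cancel hℓp.le]) h⟩

end

theorem phi_equal_count_generic (ℓ : ℕ) (hℓ : 0 < ℓ)
    (h4 : ¬ ∃ n : ℕ, 1 ≤ n ∧ ℓ = 4 ^ n - 1) :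
    ∃ C : ℝ, 0 < C ∧ ∀ᶠ x : ℝ in atTop,
      ({p : ℕ | p.Prime ∧ (p : ℝ) ≤ x ∧ ℓ < p ∧
          Nat.totient (p - ℓ) = Nat.totient (p + ℓ)}.ncard : ℝ) ≤
        C * x / Real.exp ((Real.log x) ^ ((1 : ℝ) / 3)) := by
  refine ⟨15, by norm_num, ?_⟩
  filter_upwards [eventually_countUpTo_isNondegenerateSolution_le (Nat.mul_pos two_pos hℓ)]
    with x hx
  refine (Nat.cast_le.mpr ?_).trans hx
  refine Set.ncard_le_ncard_of_injOn (· - ℓ) ?_ ?_ ((Set.finite_Ioc 0 ⌊x⌋₊).sep _)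
  · rintro p ⟨hp, hpx, hℓp, hφ⟩
    exact ⟨⟨Nat.sub_pos_of_lt hℓp, (Nat.sub_le p ℓ).trans (Nat.le_floor hpx)⟩,
      isNondegenerateSolution_sub_of_prime hℓ h4 hp hℓp hφ⟩
  · rintro p ⟨-, -, hp, -⟩ q ⟨-, -, hq, -⟩ hpq
    exact (tsub_left_inj hp.le hq.le).mp hpq
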